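/- Let s ≥ 2, let ψ : [0,1]^{s-1} → ℝ≥0 be measurable with ψ(z) ≤ L for all z (0 < L < ∞), C = ∫_{[0,1]^{s-1}} ψ > 0, A = {z ∈ [0,1]^s : ψ(z_1,…,z_{s-1}) ≥ L z_s}, and assume ∂A admits an (s−1)-dimensional Minkowski content M_A ∈ (0,∞). Then there exists m_0 ∈ ℕ such that for every m ≥ m_0 there exists a point set P = {x_c} ⊆ [0,1)^s with exactly one point in each of the M = m^s grid cubes Q_c = ∏_{j=1}^s [c_j/m,(c_j+1)/m), such that, with N = #(P ∩ A) and y_0,…,y_{N−1} the projections onto the first s−1 coordinates of the points of P ∩ A, the star discrepancy with respect to ψ satisfies D*_{N,ψ}(Y) = sup_{t ∈ [0,1]^{s-1}} |(1/N) Σ_{n=0}^{N−1} 1_{[0,t)}(y_n) − (1/C) ∫_{[0,t)} ψ(z) dz| ≤ (s^{3/4} √(6 M_A) / ((2L)^{1/(2s) − 1/2} C^{1/2 − 1/(2s)})) · √(log N) / N^{1/2 + 1/(2s)} + 2C/(L N). -/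

import Mathlib

open MeasureTheory Set Filter

/-- The half-open anchored box `[0,t) = ∏_j [0, t_j)`. -/
def lowerBox {d : ℕ} (t : Fin d → ℝ) : Set (Fin d → ℝ) :=
  {y | ∀ i, 0 ≤ y i ∧ y i < t i}

/-- The region `A = {z ∈ [0,1]^s : ψ(z_1,…,z_{s-1}) ≥ L z_s}` (with `s = d+1`). -/
def graphRegion {d : ℕ} (ψ : (Fin d → ℝ) → ℝ) (L : ℝ) : Set ((Fin d → ℝ) × ℝ) :=
  {z | z.1 ∈ Icc (0 : Fin d → ℝ) 1 ∧ z.2 ∈ Icc (0 : ℝ) 1 ∧ L * z.2 ≤ ψ z.1}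

/-- The closed Euclidean `ε`-neighborhood of a set `E ⊆ ℝ^{d} × ℝ = ℝ^{d+1}`. -/
def euclNbhdP {d : ℕ} (E : Set ((Fin d → ℝ) × ℝ)) (ε : ℝ) : Set ((Fin d → ℝ) × ℝ) :=
  {x | ∃ y ∈ E, Real.sqrt ((∑ i, (x.1 i - y.1 i) ^ 2) + (x.2 - y.2) ^ 2) ≤ ε}

/-- `∂A` admits the `(s-1)`-dimensional Minkowski content `M` (with `s = d+1`). -/
def HasMinkowskiContentP {d : ℕ} (A : Set ((Fin d → ℝ) × ℝ)) (M : ℝ) : Prop :=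
  Tendsto (fun ε : ℝ => (volume (euclNbhdP (frontier A) ε)).toReal / (2 * ε))
    (nhdsWithin 0 (Set.Ioi 0)) (nhds M)

/-- The grid cube `Q_c = ∏_{j=1}^{d+1} [c_j/m, (c_j+1)/m)` in `[0,1)^{d+1}`, indexed by
`c ∈ {0,…,m-1}^d × {0,…,m-1}`. -/
def gridCubeP {d m : ℕ} (c : (Fin d → Fin m) × Fin m) : Set ((Fin d → ℝ) × ℝ) :=
  {z | (∀ i, (c.1 i : ℝ) / m ≤ z.1 i ∧ z.1 i < ((c.1 i : ℝ) + 1) / m) ∧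
       ((c.2 : ℝ) / m ≤ z.2 ∧ z.2 < ((c.2 : ℝ) + 1) / m)}

/-!
Choose one uniformly distributed point in each grid cube, independently. For an anchored box
`[0, t)`, the deviation of the number of accepted points over `[0, t)` from its expected value is a
sum of independent terms which are constant except on the cells that meet both `A` and its
complement, and on the cells contained in `A` that are cut by the upper faces of `[0, t)`. There are
only `O(m ^ d)` of these: sliding a cut cell along the diagonal until it leaves `A` maps the cut
cells injectively to cells near `∂A`, and the Minkowski content bounds the volume, hence the number,
of the cells near `∂A`. By Hoeffding's inequality and a union bound, some choice of points has
deviation `O(√(m ^ d log m))` for all boxes with corners in a lattice of mesh `m ^ (-(d + 2))`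
simultaneously. Every other box is squeezed between two of these, at the cost of an error
`O(1 / N)`, and the number `N` of accepted points is comparable to `m ^ (d + 1)`.
-/

open Metric ProbabilityTheory Real
open scoped Topology NNReal

variable {d m : ℕ}

/-! ### Neighbourhoods of the frontier -/

theorem nonempty_inter_frontier_of_isPreconnected {X : Type*} [TopologicalSpace X] {s A : Set X}
    (hs : IsPreconnected s) (h : (s ∩ A).Nonempty) (h' : (s \ A).Nonempty) :
    (s ∩ frontier A).Nonempty := by
  by_contra hempty
  have hcover : s ⊆ interior A ∪ interior Aᶜ := by
    rw [← compl_frontier_eq_union_interior]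
    exact fun p hp hfr ↦ hempty ⟨p, hp, hfr⟩
  obtain ⟨x, hxs, hxA⟩ := h
  obtain ⟨y, hys, hyA⟩ := h'
  obtain ⟨z, -, hzA, hzA'⟩ := hs _ _ isOpen_interior isOpen_interior hcover
    ⟨x, hxs, (hcover hxs).resolve_right fun hx ↦ interior_subset hx hxA⟩
    ⟨y, hys, (hcover hys).resolve_left fun hy ↦ hyA (interior_subset hy)⟩
  exact interior_subset hzA' (interior_subset hzA)

theorem mem_euclNbhdP_of_dist_le {E : Set ((Fin d → ℝ) × ℝ)} {p z : (Fin d → ℝ) × ℝ} {δ : ℝ}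
    (hp : p ∈ E) (h : dist z p ≤ δ) : z ∈ euclNbhdP E (√(d + 1) * δ) := by
  have hδ : 0 ≤ δ := dist_nonneg.trans h
  have hcoord : ∀ i, (z.1 i - p.1 i) ^ 2 ≤ δ ^ 2 := fun i ↦
    sq_le_sq' (neg_le_of_abs_le <| (dist_le_pi_dist z.1 p.1 i).trans <| (le_max_left _ _).trans h)
      (le_of_abs_le <| (dist_le_pi_dist z.1 p.1 i).trans <| (le_max_left _ _).trans h)
  have hlast : (z.2 - p.2) ^ 2 ≤ δ ^ 2 :=
    sq_le_sq' (neg_le_of_abs_le <| (le_max_right _ _).trans h)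
      (le_of_abs_le <| (le_max_right _ _).trans h)
  refine ⟨p, hp, Real.sqrt_le_iff.2 ⟨by positivity, ?_⟩⟩
  calc ∑ i, (z.1 i - p.1 i) ^ 2 + (z.2 - p.2) ^ 2
      ≤ ∑ _i : Fin d, δ ^ 2 + δ ^ 2 := add_le_add (Finset.sum_le_sum fun i _ ↦ hcoord i) hlast
    _ = (√(d + 1) * δ) ^ 2 := by
        rw [mul_pow, Real.sq_sqrt (by positivity), Fin.sum_const, nsmul_eq_mul]; ring

theorem closedBall_subset_euclNbhdP_frontier {A : Set ((Fin d → ℝ) × ℝ)} {q : (Fin d → ℝ) × ℝ}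
    {δ : ℝ} (h : (closedBall q δ ∩ A).Nonempty) (h' : (closedBall q δ \ A).Nonempty) :
    closedBall q δ ⊆ euclNbhdP (frontier A) (√(d + 1) * (2 * δ)) := by
  obtain ⟨p, hpq, hp⟩ :=
    nonempty_inter_frontier_of_isPreconnected (convex_closedBall q δ).isPreconnected h h'
  exact fun z hz ↦ mem_euclNbhdP_of_dist_le hp <| by
    linarith [dist_triangle_right z p q, mem_closedBall.1 hz, mem_closedBall.1 hpq]

/-! ### Cells of the lattice -/

/-- The half-open cube of side `1 / m` with lower corner `(a, b) / m`. The cubes `gridCubeP` are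
the cells inside the unit cube; indices beyond `m` allow cells to slide out of it. -/
def latticeCell (m : ℕ) (a : Fin d → ℕ) (b : ℕ) : Set ((Fin d → ℝ) × ℝ) :=
  (univ.pi fun i ↦ Ico ((a i : ℝ) / m) ((a i + 1) / m)) ×ˢ Ico ((b : ℝ) / m) ((b + 1) / m)

/-- The indices of the cubes `gridCubeP`. -/
abbrev GridIndex (d m : ℕ) : Type := (Fin d → Fin m) × Fin m

theorem gridCubeP_eq_latticeCell (c : GridIndex d m) :
    gridCubeP c = latticeCell m (fun i ↦ c.1 i) c.2 := by
  ext z; simp [gridCubeP, latticeCell]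

theorem latticeCell_nonempty (hm : 0 < m) (a : Fin d → ℕ) (b : ℕ) :
    (latticeCell m a b).Nonempty := by
  refine .prod (univ_pi_nonempty_iff.2 fun i ↦ ?_) ?_ <;>
    exact nonempty_Ico.2 (by gcongr; linarith)

theorem measurableSet_gridCubeP (c : GridIndex d m) : MeasurableSet (gridCubeP c) := by
  rw [gridCubeP_eq_latticeCell]
  exact (MeasurableSet.univ_pi fun _ ↦ measurableSet_Ico).prod measurableSet_Ico

theorem volume_gridCubeP (c : GridIndex d m) :
    volume (gridCubeP c) = ENNReal.ofReal ((m : ℝ) ^ (d + 1))⁻¹ := by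
  rw [gridCubeP_eq_latticeCell, latticeCell, Measure.volume_eq_prod, Measure.prod_prod,
    volume_pi_pi]
  simp only [Real.volume_Ico, ← sub_div, add_sub_cancel_left, Fin.prod_const]
  rw [← pow_succ, ← ENNReal.ofReal_pow (by positivity), one_div, inv_pow]

theorem mem_gridCubeP_iff {c : GridIndex d m} {z : (Fin d → ℝ) × ℝ} :
    z ∈ gridCubeP c ↔ (∀ i, ⌊z.1 i * m⌋ = c.1 i) ∧ ⌊z.2 * m⌋ = c.2 := by
  have hm : (0 : ℝ) < m := Nat.cast_pos.2 c.2.pos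
  simp [gridCubeP, Int.floor_eq_iff, div_le_iff₀ hm, lt_div_iff₀ hm]

theorem pairwise_disjoint_gridCubeP :
    Pairwise (Function.onFun Disjoint (gridCubeP : GridIndex d m → Set ((Fin d → ℝ) × ℝ))) := by
  intro c c' hne
  refine disjoint_left.2 fun z hz hz' ↦ hne ?_
  rw [mem_gridCubeP_iff] at hz hz'
  exact Prod.ext (funext fun i ↦ Fin.ext <| Nat.cast_injective <| (hz.1 i).symm.trans (hz'.1 i))
    (Fin.ext <| Nat.cast_injective <| hz.2.symm.trans hz'.2)

theorem exists_fin_floor_eq_iff (hm : 0 < m) {x : ℝ} :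
    (∃ j : Fin m, ⌊x * m⌋ = j) ↔ x ∈ Ico (0 : ℝ) 1 := by
  have hm' : (0 : ℝ) < m := Nat.cast_pos.2 hm
  constructor
  · rintro ⟨j, hj⟩
    obtain ⟨hle, hlt⟩ := Int.floor_eq_iff.1 hj
    have hj1 : (j : ℝ) + 1 ≤ m := mod_cast j.isLt
    push_cast at hle hlt
    exact ⟨nonneg_of_mul_nonneg_left (j.val.cast_nonneg.trans hle) hm', by nlinarith⟩
  · rintro ⟨h0, h1⟩
    refine ⟨⟨⌊x * m⌋₊, (Nat.floor_lt (by positivity)).2 (by nlinarith)⟩, ?_⟩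
    exact (Int.natCast_floor_eq_floor (by positivity)).symm

theorem iUnion_gridCubeP (hm : 0 < m) :
    ⋃ c : GridIndex d m, gridCubeP c = (univ.pi fun _ ↦ Ico (0 : ℝ) 1) ×ˢ Ico (0 : ℝ) 1 := by
  ext z
  simp only [mem_iUnion, mem_gridCubeP_iff, Prod.exists, exists_and_left, exists_and_right,
    mem_prod, mem_univ_pi, ← exists_fin_floor_eq_iff hm, Classical.skolem]

theorem iUnion_gridCubeP_ae_eq (hm : 0 < m) :
    ⋃ c : GridIndex d m, gridCubeP c =ᵐ[volume] Icc (0 : (Fin d → ℝ) × ℝ) 1 := by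
  rw [iUnion_gridCubeP hm, Icc_prod_eq, Measure.volume_eq_prod]
  exact Measure.set_prod_ae_eq Measure.univ_pi_Ico_ae_eq_Icc Ico_ae_eq_Icc

theorem lt_of_latticeCell_subset_Icc (hm : 0 < m) {a : Fin d → ℕ} {b : ℕ}
    (h : latticeCell m a b ⊆ Icc 0 1) (i : Fin d) : a i < m := by
  have hm' : (0 : ℝ) < m := Nat.cast_pos.2 hm
  have hmid : ((fun i ↦ (a i + 1 / 2) / m, b / m) : (Fin d → ℝ) × ℝ) ∈ latticeCell m a b := by
    refine ⟨fun i _ ↦ ⟨?_, ?_⟩, ?_, ?_⟩ <;> dsimp only <;> gcongr <;> linarith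
  have hle : (a i + 1 / 2) / m ≤ (1 : ℝ) := (h hmid).2.1 i
  rw [div_le_one hm'] at hle
  exact_mod_cast (by linarith : (a i : ℝ) < m)

theorem latticeCell_union_succ_subset_closedBall (m : ℕ) (a : Fin d → ℕ) (b : ℕ) :
    latticeCell m a b ∪ latticeCell m (a + 1) b
      ⊆ closedBall (fun i ↦ (a i + 1) / m, b / m) (1 / m) := by
  rintro z (⟨ha, hb⟩ | ⟨ha, hb⟩) <;>
    refine mem_closedBall.2 <|
      max_le ((dist_pi_le_iff (by positivity)).2 fun i ↦ abs_sub_le_iff.2 ?_) (abs_sub_le_iff.2 ?_)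
  all_goals
    first
    | have := ha i (mem_univ i)
    | have := hb
    simp only [Pi.add_apply, Pi.one_apply, Nat.cast_add, Nat.cast_one, mem_Ico, add_div] at *
    constructor <;> linarith

theorem latticeCell_subset_euclNbhdP_frontier {a : Fin d → ℕ} {b : ℕ}
    {A : Set ((Fin d → ℝ) × ℝ)} (h : (latticeCell m a b ∩ A).Nonempty)
    (h' : ¬latticeCell m a b ∪ latticeCell m (a + 1) b ⊆ A) :
    latticeCell m a b ⊆ euclNbhdP (frontier A) (√(d + 1) * (2 * (1 / m))) := by
  have hball := latticeCell_union_succ_subset_closedBall m a b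
  have hleft := subset_union_left.trans hball
  exact hleft.trans <| closedBall_subset_euclNbhdP_frontier
    (h.mono <| inter_subset_inter_left A hleft)
    (by rw [← sdiff_nonempty] at h'; exact h'.mono <| sdiff_subset_sdiff_left hball)

/-! ### Counting cells -/

open Classical in
/-- The cells that contain points both inside and outside of `A`. -/
noncomputable def boundaryCells (m : ℕ) (A : Set ((Fin d → ℝ) × ℝ)) : Finset (GridIndex d m) :=
  {c | (gridCubeP c ∩ A).Nonempty ∧ ¬gridCubeP c ⊆ A}

open Classical in
/-- The cells inside `A` whose projection to the first `d` coordinates meets both `[0, t)` and its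
complement. -/
noncomputable def cutCells (m : ℕ) (A : Set ((Fin d → ℝ) × ℝ)) (t : Fin d → ℝ) :
    Finset (GridIndex d m) :=
  {c | gridCubeP c ⊆ A ∧ (∀ i, (c.1 i : ℝ) / m < t i) ∧ ∃ i, t i < ((c.1 i : ℝ) + 1) / m}

open Classical in
/-- The cells inside the Euclidean neighbourhood of radius `2√(d + 1) / m` of the frontier of `A`,
that is, within twice their diameter. -/
noncomputable def nearFrontierCells (m : ℕ) (A : Set ((Fin d → ℝ) × ℝ)) :
    Finset (GridIndex d m) :=
  {c | gridCubeP c ⊆ euclNbhdP (frontier A) (√(d + 1) * (2 * (1 / m)))}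

theorem mem_boundaryCells {A : Set ((Fin d → ℝ) × ℝ)} {c : GridIndex d m} :
    c ∈ boundaryCells m A ↔ (gridCubeP c ∩ A).Nonempty ∧ ¬gridCubeP c ⊆ A := by
  simp [boundaryCells]

theorem mem_cutCells {A : Set ((Fin d → ℝ) × ℝ)} {t : Fin d → ℝ} {c : GridIndex d m} :
    c ∈ cutCells m A t ↔ gridCubeP c ⊆ A ∧ (∀ i, (c.1 i : ℝ) / m < t i) ∧
      ∃ i, t i < ((c.1 i : ℝ) + 1) / m := by
  simp [cutCells]

theorem mem_nearFrontierCells {A : Set ((Fin d → ℝ) × ℝ)} {c : GridIndex d m} :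
    c ∈ nearFrontierCells m A ↔
      gridCubeP c ⊆ euclNbhdP (frontier A) (√(d + 1) * (2 * (1 / m))) := by
  simp [nearFrontierCells]

theorem boundaryCells_subset_nearFrontierCells (m : ℕ) (A : Set ((Fin d → ℝ) × ℝ)) :
    boundaryCells m A ⊆ nearFrontierCells m A := fun c hc ↦ by
  rw [mem_boundaryCells, gridCubeP_eq_latticeCell] at hc
  rw [mem_nearFrontierCells, gridCubeP_eq_latticeCell]
  exact latticeCell_subset_euclNbhdP_frontier hc.1 fun h ↦ hc.2 <| subset_union_left.trans h

/-- Slide the cell along the diagonal of the first `d` coordinates and stop just before it leaves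
`A`. -/
theorem exists_diagonal_shift_mem_nearFrontierCells (hd : 1 ≤ d) {A : Set ((Fin d → ℝ) × ℝ)}
    (hA : A ⊆ Icc 0 1) {c : GridIndex d m} (hc : gridCubeP c ⊆ A) :
    ∃ c' ∈ nearFrontierCells m A, gridCubeP c' ⊆ A ∧ c'.2 = c.2 ∧
      ∃ k : ℕ, ∀ i, (c'.1 i : ℕ) = c.1 i + k := by
  have hm : 0 < m := c.2.pos
  set a : Fin d → ℕ := fun i ↦ c.1 i
  have hlt {k : ℕ} (hk : latticeCell m (a + (k : Fin d → ℕ)) c.2 ⊆ A) (i : Fin d) : a i + k < m :=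
    lt_of_latticeCell_subset_Icc hm (hk.trans hA) i
  obtain ⟨k, hk, hk'⟩ := Nat.exists_not_and_succ_of_not_zero_of_exists
    (p := fun k : ℕ ↦ ¬latticeCell m (a + (k : Fin d → ℕ)) c.2 ⊆ A)
    (by simpa [gridCubeP_eq_latticeCell] using hc)
    ⟨m, fun h ↦ absurd (hlt h ⟨0, hd⟩) (by omega)⟩
  rw [not_not] at hk
  let c' : GridIndex d m := (fun i ↦ ⟨a i + k, hlt hk i⟩, c.2)
  have hc' : gridCubeP c' = latticeCell m (a + (k : Fin d → ℕ)) c.2 := gridCubeP_eq_latticeCell c'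
  refine ⟨c', ?_, hc' ▸ hk, rfl, k, fun i ↦ rfl⟩
  rw [mem_nearFrontierCells, hc']
  rw [Nat.cast_succ, ← add_assoc] at hk'
  refine latticeCell_subset_euclNbhdP_frontier ?_ fun h ↦ hk' <| subset_union_right.trans h
  rw [inter_eq_left.2 hk]
  exact latticeCell_nonempty hm _ _

theorem eq_of_mem_cutCells_of_add_eq {A : Set ((Fin d → ℝ) × ℝ)} {t : Fin d → ℝ}
    {c₁ c₂ : GridIndex d m} (hc₁ : c₁ ∈ cutCells m A t) (hc₂ : c₂ ∈ cutCells m A t)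
    (hlast : c₁.2 = c₂.2) {k₁ k₂ : ℕ} (h : ∀ i, (c₁.1 i : ℕ) + k₁ = c₂.1 i + k₂) : c₁ = c₂ := by
  wlog hk : k₁ ≤ k₂ generalizing c₁ c₂ k₁ k₂
  · exact (this hc₂ hc₁ hlast.symm (fun i ↦ (h i).symm) (Nat.le_of_not_le hk)).symm
  rw [mem_cutCells] at hc₁ hc₂
  rcases hk.eq_or_lt with rfl | hk
  · exact Prod.ext (funext fun i ↦ Fin.ext <| Nat.add_right_cancel (h i)) hlast
  · obtain ⟨-, -, i, hi⟩ := hc₂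
    have hle : (c₂.1 i : ℝ) + 1 ≤ c₁.1 i := mod_cast (by have := h i; omega)
    have hcross : ((c₂.1 i : ℝ) + 1) / m ≤ c₁.1 i / m := by gcongr
    exact absurd (hi.trans_le hcross) (hc₁.2.1 i).not_gt

theorem card_boundaryCells_union_cutCells_le [DecidableEq (GridIndex d m)] (hd : 1 ≤ d)
    {A : Set ((Fin d → ℝ) × ℝ)} (hA : A ⊆ Icc 0 1) (t : Fin d → ℝ) :
    (boundaryCells m A ∪ cutCells m A t).card ≤ (nearFrontierCells m A).card := by
  classical
  choose! slide hnear hsub hlast k hshift using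
    fun (c : GridIndex d m) (hc : gridCubeP c ⊆ A) ↦
      exists_diagonal_shift_mem_nearFrontierCells hd hA hc
  have hbd {c : GridIndex d m} (hc : c ∈ boundaryCells m A) : ¬gridCubeP c ⊆ A :=
    (mem_boundaryCells.1 hc).2
  have hcut {c : GridIndex d m} (hc : c ∈ cutCells m A t) : gridCubeP c ⊆ A :=
    (mem_cutCells.1 hc).1
  refine Finset.card_le_card_of_injOn (fun c ↦ if gridCubeP c ⊆ A then slide c else c)
    (fun c hc ↦ ?_) fun c₁ hc₁ c₂ hc₂ heq ↦ ?_
  · rcases Finset.mem_union.1 hc with hc | hc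
    · simpa [hbd hc] using boundaryCells_subset_nearFrontierCells m A hc
    · simpa [hcut hc] using hnear c (hcut hc)
  · rcases Finset.mem_union.1 hc₁ with hc₁ | hc₁ <;> rcases Finset.mem_union.1 hc₂ with hc₂ | hc₂
    · simpa [hbd hc₁, hbd hc₂] using heq
    · simp only [hbd hc₁, hcut hc₂, if_true, if_false] at heq
      exact absurd (heq ▸ hsub c₂ (hcut hc₂)) (hbd hc₁)
    · simp only [hcut hc₁, hbd hc₂, if_true, if_false] at heq
      exact absurd (heq ▸ hsub c₁ (hcut hc₁)) (hbd hc₂)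
    · simp only [hcut hc₁, hcut hc₂, if_true] at heq
      refine eq_of_mem_cutCells_of_add_eq (k₁ := k c₁) (k₂ := k c₂) hc₁ hc₂ ?_ fun i ↦ ?_
      · rw [← hlast c₁ (hcut hc₁), ← hlast c₂ (hcut hc₂), heq]
      · rw [← hshift c₁ (hcut hc₁), ← hshift c₂ (hcut hc₂), heq]

theorem card_mul_le_volume (S : Finset (GridIndex d m)) {B : Set ((Fin d → ℝ) × ℝ)}
    (h : ∀ c ∈ S, gridCubeP c ⊆ B) :
    S.card * ENNReal.ofReal ((m : ℝ) ^ (d + 1))⁻¹ ≤ volume B :=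
  calc S.card * ENNReal.ofReal ((m : ℝ) ^ (d + 1))⁻¹ = volume (⋃ c ∈ S, gridCubeP c) := by
        rw [measure_biUnion_finset (fun _ _ _ _ hne ↦ pairwise_disjoint_gridCubeP hne)
          fun c _ ↦ measurableSet_gridCubeP c]
        simp only [volume_gridCubeP, Finset.sum_const, nsmul_eq_mul]
    _ ≤ volume B := measure_mono (iUnion₂_subset h)

theorem eventually_card_nearFrontierCells_le {A : Set ((Fin d → ℝ) × ℝ)} {κ : ℝ} (hκ : 0 ≤ κ)
    (hvol : ∀ᶠ ε in 𝓝[>] 0, volume (euclNbhdP (frontier A) ε) ≤ ENNReal.ofReal (2 * κ * ε)) :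
    ∀ᶠ m : ℕ in atTop, ((nearFrontierCells m A).card : ℝ) ≤ 4 * √(d + 1) * κ * m ^ d := by
  have hlim : Tendsto (fun m : ℕ ↦ √(d + 1) * (2 * (1 / (m : ℝ)))) atTop (𝓝[>] 0) := by
    refine tendsto_nhdsWithin_iff.2 ⟨?_, ?_⟩
    · simpa using (tendsto_one_div_atTop_nhds_zero_nat.const_mul 2).const_mul √(d + 1 : ℝ)
    · filter_upwards [eventually_gt_atTop 0] with m hm
      have : (0 : ℝ) < m := Nat.cast_pos.2 hm
      exact mem_Ioi.2 (by positivity)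
  filter_upwards [hlim.eventually hvol, eventually_gt_atTop 0] with m hm hm0
  have hcard := (card_mul_le_volume (nearFrontierCells m A) fun c ↦
    mem_nearFrontierCells.1).trans hm
  rw [← ENNReal.ofReal_natCast, ← ENNReal.ofReal_mul (by positivity),
    ENNReal.ofReal_le_ofReal_iff (by positivity), ← div_eq_mul_inv,
    div_le_iff₀ (by positivity)] at hcard
  refine hcard.trans_eq ?_
  field_simp
  ring

/-! ### Concentration of stratified sums -/

section Concentration

variable {Ω κ : Type*} [MeasurableSpace Ω] {μ : Measure Ω} {c : ℝ≥0}

theorem hasSubgaussianMGF_mono {X : Ω → ℝ} {c' : ℝ≥0} (h : HasSubgaussianMGF X c μ)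
    (hc : c ≤ c') : HasSubgaussianMGF X c' μ where
  integrable_exp_mul := h.integrable_exp_mul
  mgf_le t := (h.mgf_le t).trans <| by gcongr

theorem measureReal_abs_ge_le_of_hasSubgaussianMGF [IsFiniteMeasure μ] {X : Ω → ℝ}
    (h : HasSubgaussianMGF X c μ) {r : ℝ} (hr : 0 ≤ r) :
    μ.real {ω | r ≤ |X ω|} ≤ 2 * exp (-r ^ 2 / (2 * c)) := by
  have hunion : {ω | r ≤ |X ω|} = {ω | r ≤ X ω} ∪ {ω | r ≤ (-X) ω} := by
    ext ω; simp [le_abs]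
  rw [hunion, two_mul]
  exact (measureReal_union_le _ _).trans <|
    add_le_add (h.measure_ge_le hr) (h.neg.measure_ge_le hr)

theorem exists_forall_abs_lt_of_hasSubgaussianMGF [Fintype κ] [IsProbabilityMeasure μ]
    {X : κ → Ω → ℝ} (h : ∀ k, HasSubgaussianMGF (X k) c μ) {r : ℝ} (hr : 0 ≤ r)
    (hlt : Fintype.card κ * (2 * exp (-r ^ 2 / (2 * c))) < 1) {P : Ω → Prop}
    (hP : ∀ᵐ ω ∂μ, P ω) : ∃ ω, P ω ∧ ∀ k, |X k ω| < r := by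
  by_contra! hbad
  have hcover : univ ≤ᵐ[μ] ⋃ k, {ω | r ≤ |X k ω|} := by
    filter_upwards [hP] with ω hω _ using mem_iUnion.2 (hbad ω hω)
  refine hlt.not_ge ?_
  calc 1 = μ.real univ := probReal_univ.symm
    _ ≤ μ.real (⋃ k, {ω | r ≤ |X k ω|}) :=
        ENNReal.toReal_mono (measure_ne_top _ _) (measure_mono_ae hcover)
    _ ≤ ∑ k, μ.real {ω | r ≤ |X k ω|} := measureReal_iUnion_fintype_le _
    _ ≤ ∑ _k : κ, 2 * exp (-r ^ 2 / (2 * c)) :=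
        Finset.sum_le_sum fun k _ ↦ measureReal_abs_ge_le_of_hasSubgaussianMGF (h k) hr
    _ = Fintype.card κ * (2 * exp (-r ^ 2 / (2 * c))) := by simp

theorem hasSubgaussianMGF_sum_pi_of_mem_Icc {ι : Type*} [Fintype ι] {Ω : ι → Type*}
    [∀ i, MeasurableSpace (Ω i)] {μ : ∀ i, Measure (Ω i)} [∀ i, IsProbabilityMeasure (μ i)]
    {f : ∀ i, Ω i → ℝ} (hf : ∀ i, AEMeasurable (f i) (μ i)) {a b : ι → ℝ} (s : Finset ι)
    (hab : ∀ i ∈ s, ∀ᵐ z ∂μ i, f i z ∈ Icc (a i) (b i)) :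
    HasSubgaussianMGF (fun x : ∀ i, Ω i ↦ ∑ i ∈ s, (f i (x i) - ∫ z, f i z ∂μ i))
      (∑ i ∈ s, (‖b i - a i‖₊ / 2) ^ 2) (Measure.pi μ) := by
  refine HasSubgaussianMGF.sum_of_iIndepFun
    (iIndepFun_pi fun i ↦ (hf i).sub_const (∫ z, f i z ∂μ i)) fun i hi ↦ ?_
  have heval := measurePreserving_eval μ i
  have hsub : HasSubgaussianMGF (fun z ↦ f i z - ∫ z, f i z ∂μ i) ((‖b i - a i‖₊ / 2) ^ 2)
      ((Measure.pi μ).map (Function.eval i)) := by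
    rw [heval.map_eq]
    exact hasSubgaussianMGF_of_mem_Icc (hf i) (hab i hi)
  exact hsub.of_map heval.measurable.aemeasurable

end Concentration

theorem isProbabilityMeasure_cond_gridCubeP (c : GridIndex d m) :
    IsProbabilityMeasure (volume[|gridCubeP c] : Measure ((Fin d → ℝ) × ℝ)) := by
  have hm : (0 : ℝ) < m := Nat.cast_pos.2 c.2.pos
  refine cond_isProbabilityMeasure_of_finite ?_ ?_ <;> rw [volume_gridCubeP]
  · exact (ENNReal.ofReal_pos.2 (by positivity)).ne'
  · exact ENNReal.ofReal_ne_top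

theorem integral_cond_gridCubeP (c : GridIndex d m) (f : (Fin d → ℝ) × ℝ → ℝ) :
    ∫ z, f z ∂volume[|gridCubeP c] = (m : ℝ) ^ (d + 1) * ∫ z in gridCubeP c, f z := by
  rw [ProbabilityTheory.cond, integral_smul_measure, volume_gridCubeP, ENNReal.toReal_inv,
    ENNReal.toReal_ofReal (by positivity), inv_inv, smul_eq_mul]

theorem sum_integral_cond_gridCubeP (hm : 0 < m) {f : (Fin d → ℝ) × ℝ → ℝ}
    (hf : IntegrableOn f (Icc 0 1)) :
    ∑ c : GridIndex d m, ∫ z, f z ∂volume[|gridCubeP c]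
      = (m : ℝ) ^ (d + 1) * ∫ z in Icc 0 1, f z := by
  have hae := iUnion_gridCubeP_ae_eq (d := d) hm
  simp only [integral_cond_gridCubeP, ← Finset.mul_sum]
  rw [← setIntegral_congr_set hae,
    integral_iUnion_fintype measurableSet_gridCubeP pairwise_disjoint_gridCubeP fun c ↦
      (hf.congr_set_ae hae).mono_set (subset_iUnion gridCubeP c)]

/-- Only the cells on which `f k` is not constant contribute to the random part of the sum. -/
theorem exists_mem_gridCubeP_forall_abs_sum_sub_lt {κ : Type*} [Fintype κ] (hm : 0 < m)
    {f : κ → (Fin d → ℝ) × ℝ → ℝ} (hf : ∀ k, Measurable (f k)) {a : κ → ℝ}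
    (ha : ∀ k z, f k z ∈ Icc (a k) (a k + 1)) {S : κ → Finset (GridIndex d m)}
    (hS : ∀ k, ∀ c ∉ S k, ∀ z ∈ gridCubeP c, ∀ w ∈ gridCubeP c, f k z = f k w) {v : ℝ≥0}
    (hv : ∀ k, ((S k).card : ℝ≥0) ≤ 4 * v) {r : ℝ} (hr : 0 ≤ r)
    (hlt : Fintype.card κ * (2 * exp (-r ^ 2 / (2 * v))) < 1) :
    ∃ x : GridIndex d m → (Fin d → ℝ) × ℝ, (∀ c, x c ∈ gridCubeP c) ∧
      ∀ k, |∑ c, f k (x c) - (m : ℝ) ^ (d + 1) * ∫ z in Icc 0 1, f k z| < r := by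
  let μ (c : GridIndex d m) : Measure ((Fin d → ℝ) × ℝ) := volume[|gridCubeP c]
  have hμ (c) : IsProbabilityMeasure (μ c) := isProbabilityMeasure_cond_gridCubeP c
  have hmem (c) : ∀ᵐ z ∂μ c, z ∈ gridCubeP c := ae_cond_mem (measurableSet_gridCubeP c)
  have hsub (k) : HasSubgaussianMGF (fun x ↦ ∑ c ∈ S k, (f k (x c) - ∫ z, f k z ∂μ c)) v
      (Measure.pi μ) := by
    refine hasSubgaussianMGF_mono (hasSubgaussianMGF_sum_pi_of_mem_Icc
      (fun c ↦ (hf k).aemeasurable) (S k) fun c _ ↦ ae_of_all (μ c) (ha k)) ?_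
    simp only [add_sub_cancel_left, nnnorm_one, Finset.sum_const, nsmul_eq_mul]
    calc ((S k).card : ℝ≥0) * (1 / 2) ^ 2 ≤ 4 * v * (1 / 2) ^ 2 := by gcongr; exact hv k
      _ = v := by rw [← NNReal.coe_inj]; push_cast; ring
  obtain ⟨x, hx, hxr⟩ := exists_forall_abs_lt_of_hasSubgaussianMGF hsub hr hlt
    (eventually_all.2 fun c ↦ (Measure.tendsto_eval_ae_ae (i := c)).eventually (hmem c))
  refine ⟨x, hx, fun k ↦ (le_of_eq ?_).trans_lt (hxr k)⟩
  have hconst : ∀ c ∉ S k, f k (x c) - ∫ z, f k z ∂μ c = 0 := fun c hc ↦ by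
    rw [integral_congr_ae ((hmem c).mono fun z hz ↦ hS k c hc z hz (x c) (hx c))]
    simp
  have hfin : IsFiniteMeasure (volume.restrict (Icc (0 : (Fin d → ℝ) × ℝ) 1)) :=
    isFiniteMeasure_restrict.2 isCompact_Icc.measure_lt_top.ne
  have hint : IntegrableOn (f k) (Icc 0 1) :=
    Integrable.of_mem_Icc (a k) (a k + 1) (hf k).aemeasurable (ae_of_all _ (ha k))
  rw [Finset.sum_subset (Finset.subset_univ (S k)) fun c _ ↦ hconst c, Finset.sum_sub_distrib,
    sum_integral_cond_gridCubeP hm hint]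

/-! ### The local discrepancy of a region -/

theorem lowerBox_mono {t t' : Fin d → ℝ} (h : t ≤ t') : lowerBox t ⊆ lowerBox t' :=
  fun _ hy i ↦ ⟨(hy i).1, (hy i).2.trans_le (h i)⟩

theorem measurableSet_lowerBox (t : Fin d → ℝ) : MeasurableSet (lowerBox t) := by
  have hpi : lowerBox t = univ.pi fun i ↦ Ico 0 (t i) := by ext; simp [lowerBox]
  exact hpi ▸ .univ_pi fun _ ↦ measurableSet_Ico

/-- The proportion of the region `A` that lies over the anchored box `[0, t)`. -/
noncomputable def boxFraction (A : Set ((Fin d → ℝ) × ℝ)) (t : Fin d → ℝ) : ℝ :=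
  volume.real (A ∩ lowerBox t ×ˢ univ) / volume.real A

/-- The contribution of a single point of `ℝᵈ × ℝ` to the difference between the number of accepted
points over `[0, t)` and its expected value: `1_[0, t) - boxFraction A t` on `A`, and `0` outside
of `A`. -/
noncomputable def boxDeviation (A : Set ((Fin d → ℝ) × ℝ)) (t : Fin d → ℝ) :
    (Fin d → ℝ) × ℝ → ℝ :=
  A.indicator fun z ↦ (lowerBox t).indicator (fun _ ↦ 1) z.1 - boxFraction A t

variable {A : Set ((Fin d → ℝ) × ℝ)}

theorem boxFraction_mono (hA : volume A ≠ ⊤) : Monotone (boxFraction A) := fun t t' h ↦ by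
  have hfin : volume (A ∩ lowerBox t' ×ˢ univ) ≠ ⊤ := measure_ne_top_of_subset inter_subset_left hA
  unfold boxFraction
  gcongr
  exact lowerBox_mono h

theorem boxFraction_nonneg (A : Set ((Fin d → ℝ) × ℝ)) (t : Fin d → ℝ) : 0 ≤ boxFraction A t :=
  div_nonneg measureReal_nonneg measureReal_nonneg

theorem boxFraction_le_one (hA : volume A ≠ ⊤) (t : Fin d → ℝ) : boxFraction A t ≤ 1 :=
  div_le_one_of_le₀ (measureReal_mono inter_subset_left hA) measureReal_nonneg

theorem measurable_boxDeviation (hA : MeasurableSet A) (t : Fin d → ℝ) :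
    Measurable (boxDeviation A t) :=
  (((measurable_const.indicator (measurableSet_lowerBox t)).comp measurable_fst).sub_const
    _).indicator hA

theorem boxDeviation_mem_Icc (hA : volume A ≠ ⊤) (t : Fin d → ℝ) (z : (Fin d → ℝ) × ℝ) :
    boxDeviation A t z ∈ Icc (-boxFraction A t) (-boxFraction A t + 1) := by
  have h0 := boxFraction_nonneg A t
  have h1 := boxFraction_le_one hA t
  by_cases hz : z ∈ A <;> by_cases hzt : z.1 ∈ lowerBox t <;>
    simp only [boxDeviation, hz, hzt, indicator_of_mem, indicator_of_notMem, not_false_iff,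
      mem_Icc] <;>
    constructor <;> linarith

theorem integral_boxDeviation (hA : MeasurableSet A) (hfin : volume A ≠ ⊤)
    (hpos : 0 < volume.real A) (t : Fin d → ℝ) : ∫ z, boxDeviation A t z = 0 := by
  have hbox : MeasurableSet (lowerBox t ×ˢ (univ : Set ℝ)) :=
    (measurableSet_lowerBox t).prod MeasurableSet.univ
  have hind : (fun z : (Fin d → ℝ) × ℝ ↦ (lowerBox t).indicator (fun _ ↦ (1 : ℝ)) z.1)
      = (lowerBox t ×ˢ univ).indicator 1 := by
    ext z; by_cases hz : z.1 ∈ lowerBox t <;> simp [hz]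
  have hone : IntegrableOn (1 : (Fin d → ℝ) × ℝ → ℝ) A := integrableOn_const hfin
  calc ∫ z, boxDeviation A t z
      = ∫ z in A, ((lowerBox t ×ˢ univ).indicator 1 z - boxFraction A t) := by
        rw [boxDeviation, integral_indicator hA, ← hind]
    _ = volume.real (A ∩ lowerBox t ×ˢ univ) - volume.real A * boxFraction A t := by
        rw [integral_sub (hone.indicator hbox) (integrableOn_const hfin),
          setIntegral_indicator hbox]
        simp
    _ = 0 := by rw [boxFraction, mul_div_cancel₀ _ hpos.ne', sub_self]

theorem boxDeviation_eq_of_mem_gridCubeP [DecidableEq (GridIndex d m)] {t : Fin d → ℝ}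
    {c : GridIndex d m} (hc : c ∉ boundaryCells m A ∪ cutCells m A t) {z w : (Fin d → ℝ) × ℝ}
    (hz : z ∈ gridCubeP c) (hw : w ∈ gridCubeP c) :
    boxDeviation A t z = boxDeviation A t w := by
  rw [Finset.mem_union, not_or, mem_boundaryCells, mem_cutCells] at hc
  push Not at hc
  obtain ⟨hbd, hcut⟩ := hc
  rcases (gridCubeP c ∩ A).eq_empty_or_nonempty with hempty | hne
  · have hout {u} (hu : u ∈ gridCubeP c) : u ∉ A := fun huA ↦ hempty.subset ⟨hu, huA⟩
    rw [boxDeviation, indicator_of_notMem (hout hz), indicator_of_notMem (hout hw)]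
  have hsub := hbd hne
  suffices z.1 ∈ lowerBox t ↔ w.1 ∈ lowerBox t by
    by_cases hwt : w.1 ∈ lowerBox t <;> simp [boxDeviation, hsub hz, hsub hw, this, hwt]
  by_cases hlt : ∀ i, (c.1 i : ℝ) / m < t i
  · have hin {u} (hu : u ∈ gridCubeP c) : u.1 ∈ lowerBox t := fun i ↦
      ⟨le_trans (by positivity) (hu.1 i).1, (hu.1 i).2.trans_le (hcut hsub hlt i)⟩
    exact iff_of_true (hin hz) (hin hw)
  · obtain ⟨i, hi⟩ := not_forall.1 hlt
    have hout {u} (hu : u ∈ gridCubeP c) : u.1 ∉ lowerBox t := fun h ↦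
      hi ((hu.1 i).1.trans_lt (h i).2)
    exact iff_of_false (hout hz) (hout hw)

theorem sum_comp_equiv_eq_sum_indicator {ι Ω : Type*} [Fintype ι] {A : Set Ω} {x : ι → Ω} {N : ℕ}
    (e : Fin N ≃ {c // x c ∈ A}) (g : Ω → ℝ) : ∑ k, g (x (e k)) = ∑ c, A.indicator g (x c) := by
  classical
  simp only [e.sum_comp (fun c ↦ g (x c)), indicator, ← Finset.sum_filter]
  exact (Finset.sum_subtype _ (by simp) fun c ↦ g (x c)).symm

theorem sum_boxDeviation {x : GridIndex d m → (Fin d → ℝ) × ℝ} {N : ℕ}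
    (e : Fin N ≃ {c // x c ∈ A}) (t : Fin d → ℝ) :
    ∑ c, boxDeviation A t (x c)
      = ∑ k, (lowerBox t).indicator (fun _ ↦ (1 : ℝ)) (x (e k)).1 - N * boxFraction A t := by
  unfold boxDeviation
  rw [← sum_comp_equiv_eq_sum_indicator e, Finset.sum_sub_distrib, Fin.sum_const, nsmul_eq_mul]

/-! ### From a finite net of boxes to all boxes -/

/-- The points of the unit cube whose `i`-th coordinate, `i < d`, lies between `a` and `b`
(for `[a, b] ⊆ [0, 1]`). -/
def coordSlab (i : Fin d) (a b : ℝ) : Set ((Fin d → ℝ) × ℝ) :=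
  Icc (Function.update (0 : Fin d → ℝ) i a) (Function.update 1 i b) ×ˢ Icc 0 1

theorem volume_coordSlab (i : Fin d) (a b : ℝ) :
    volume (coordSlab i a b) = ENNReal.ofReal (b - a) := by
  rw [coordSlab, Measure.volume_eq_prod, Measure.prod_prod, Real.volume_Icc_pi,
    Finset.prod_eq_single i (by simp +contextual) (by simp)]
  simp

theorem inter_lowerBox_prod_subset_union_coordSlab (hA : A ⊆ Icc 0 1) (t t' : Fin d → ℝ) :
    A ∩ lowerBox t' ×ˢ univ ⊆ A ∩ lowerBox t ×ˢ univ ∪ ⋃ i, coordSlab i (t i) (t' i) := by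
  rintro z ⟨hzA, hzt', -⟩
  refine or_iff_not_imp_left.2 fun hz ↦ ?_
  obtain ⟨i, hi⟩ : ∃ i, t i ≤ z.1 i := by
    by_contra! hlt
    exact hz ⟨hzA, fun i ↦ ⟨(hzt' i).1, hlt i⟩, mem_univ _⟩
  exact mem_iUnion.2 ⟨i, ⟨update_le_iff.2 ⟨hi, fun j _ ↦ (hA hzA).1.1 j⟩,
    le_update_iff.2 ⟨(hzt' i).2.le, fun j _ ↦ (hA hzA).2.1 j⟩⟩, (hA hzA).1.2, (hA hzA).2.2⟩

theorem boxFraction_sub_le (hA : A ⊆ Icc 0 1) {t t' : Fin d → ℝ} {δ : ℝ} (hδ₀ : 0 ≤ δ)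
    (hδ : ∀ i, t' i - t i ≤ δ) :
    boxFraction A t' - boxFraction A t ≤ d * δ / volume.real A := by
  have hfin : volume (A ∩ lowerBox t ×ˢ univ ∪ ⋃ i, coordSlab i (t i) (t' i)) ≠ ⊤ := by
    refine measure_union_ne_top (measure_ne_top_of_subset (inter_subset_left.trans hA)
      isCompact_Icc.measure_lt_top.ne) ((measure_iUnion_le _).trans_lt ?_).ne
    simp [volume_coordSlab, tsum_fintype]
  have hle : volume.real (A ∩ lowerBox t' ×ˢ univ)
      ≤ volume.real (A ∩ lowerBox t ×ˢ univ) + d * δ :=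
    calc _ ≤ volume.real (A ∩ lowerBox t ×ˢ univ ∪ ⋃ i, coordSlab i (t i) (t' i)) :=
          measureReal_mono (inter_lowerBox_prod_subset_union_coordSlab hA t t') hfin
      _ ≤ volume.real (A ∩ lowerBox t ×ˢ univ) + ∑ i, volume.real (coordSlab i (t i) (t' i)) :=
          (measureReal_union_le _ _).trans <| by gcongr; exact measureReal_iUnion_fintype_le _
      _ ≤ volume.real (A ∩ lowerBox t ×ˢ univ) + ∑ _i : Fin d, δ := by
          gcongr with i
          rw [measureReal_def, volume_coordSlab]
          exact ENNReal.toReal_le_of_le_ofReal hδ₀ (ENNReal.ofReal_le_ofReal (hδ i))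
      _ = _ := by simp
  rw [boxFraction, boxFraction, ← sub_div]
  gcongr
  linarith

theorem abs_sub_le_of_monotone_of_bracket {α : Type*} [Preorder α] {F G : α → ℝ}
    (hF : Monotone F) (hG : Monotone G) {t₁ t t₂ : α} (h₁ : t₁ ≤ t) (h₂ : t ≤ t₂) {r : ℝ}
    (hr₁ : |F t₁ - G t₁| ≤ r) (hr₂ : |F t₂ - G t₂| ≤ r) :
    |F t - G t| ≤ r + (G t₂ - G t₁) := by
  rw [abs_le] at *
  constructor <;> linarith [hF h₁, hF h₂, hG h₁, hG h₂]

/-- The points of the lattice `K⁻¹ℤᵈ` in the unit cube. -/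
noncomputable def gridPoint {K : ℕ} (k : Fin d → Fin (K + 1)) : Fin d → ℝ :=
  fun i ↦ k i / K

theorem exists_gridPoint_le_le {K : ℕ} (hK : 0 < K) {t : Fin d → ℝ} (ht : t ∈ Icc 0 1) :
    ∃ k₁ k₂ : Fin d → Fin (K + 1), gridPoint k₁ ≤ t ∧ t ≤ gridPoint k₂ ∧
      ∀ i, gridPoint k₂ i - gridPoint k₁ i ≤ 1 / K := by
  have hK' : (0 : ℝ) < K := Nat.cast_pos.2 hK
  have hceil (i) : ⌈t i * K⌉₊ < K + 1 :=
    Nat.lt_succ_of_le <| Nat.ceil_le.2 <| mul_le_of_le_one_left hK'.le (ht.2 i)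
  refine ⟨fun i ↦ ⟨⌊t i * K⌋₊, (Nat.floor_le_ceil _).trans_lt (hceil i)⟩,
    fun i ↦ ⟨⌈t i * K⌉₊, hceil i⟩, fun i ↦ ?_, fun i ↦ ?_, fun i ↦ ?_⟩
  · exact (div_le_iff₀ hK').2 <| Nat.floor_le <| mul_nonneg (ht.1 i) hK'.le
  · exact (le_div_iff₀ hK').2 <| Nat.le_ceil _
  · have hle : (⌈t i * K⌉₊ : ℝ) ≤ ⌊t i * K⌋₊ + 1 := mod_cast Nat.ceil_le_floor_add_one _
    rw [gridPoint, gridPoint, ← sub_div]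
    gcongr
    linarith

theorem abs_sum_indicator_lowerBox_sub_le (hA : A ⊆ Icc 0 1) {K : ℕ} (hK : 0 < K) {r : ℝ}
    {x : GridIndex d m → (Fin d → ℝ) × ℝ}
    (hr : ∀ k : Fin d → Fin (K + 1), |∑ c, boxDeviation A (gridPoint k) (x c)| ≤ r)
    {N : ℕ} (e : Fin N ≃ {c // x c ∈ A}) {t : Fin d → ℝ} (ht : t ∈ Icc 0 1) :
    |∑ k, (lowerBox t).indicator (fun _ ↦ (1 : ℝ)) (x (e k)).1 - N * boxFraction A t|
      ≤ r + N * (d * (1 / K) / volume.real A) := by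
  have hfin : volume A ≠ ⊤ := measure_ne_top_of_subset hA isCompact_Icc.measure_lt_top.ne
  have hcount : Monotone fun t : Fin d → ℝ ↦
      ∑ k, (lowerBox t).indicator (fun _ ↦ (1 : ℝ)) (x (e k)).1 := fun t t' h ↦
    Finset.sum_le_sum fun k _ ↦
      indicator_le_indicator_of_subset (lowerBox_mono h) (fun _ ↦ zero_le_one) _
  obtain ⟨k₁, k₂, h₁, h₂, hδ⟩ := exists_gridPoint_le_le hK ht
  refine (abs_sub_le_of_monotone_of_bracket hcount
    ((boxFraction_mono hfin).const_mul N.cast_nonneg) h₁ h₂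
    (sum_boxDeviation e (gridPoint k₁) ▸ hr k₁)
    (sum_boxDeviation e (gridPoint k₂) ▸ hr k₂)).trans ?_
  rw [← mul_sub]
  gcongr
  exact boxFraction_sub_le hA (by positivity) hδ

/-! ### The number of accepted points -/

theorem card_le_pow_of_equiv {x : GridIndex d m → (Fin d → ℝ) × ℝ} {N : ℕ}
    (e : Fin N ≃ {c // x c ∈ A}) : (N : ℝ) ≤ (m : ℝ) ^ (d + 1) := by
  have hle := Fintype.card_le_of_injective (fun k ↦ (e k : GridIndex d m))
    (Subtype.val_injective.comp e.injective)
  simp only [Fintype.card_fin, Fintype.card_prod, Fintype.card_pi, Finset.prod_const,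
    Finset.card_univ, ← pow_succ] at hle
  exact_mod_cast hle

theorem volume_mul_pow_le_add_card_nearFrontierCells (hm : 0 < m) (hA : A ⊆ Icc 0 1)
    {x : GridIndex d m → (Fin d → ℝ) × ℝ} (hx : ∀ c, x c ∈ gridCubeP c) {N : ℕ}
    (e : Fin N ≃ {c // x c ∈ A}) :
    volume.real A * (m : ℝ) ^ (d + 1) ≤ N + (nearFrontierCells m A).card := by
  classical
  have : (0 : ℝ) < m := Nat.cast_pos.2 hm
  let accepted : Finset (GridIndex d m) := {c | x c ∈ A}
  have hcells : A ∩ ⋃ c : GridIndex d m, gridCubeP c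
      ⊆ ⋃ c ∈ accepted ∪ nearFrontierCells m A, gridCubeP c := by
    rintro z ⟨hzA, hz⟩
    obtain ⟨c, hc⟩ := mem_iUnion.1 hz
    refine mem_iUnion₂.2 ⟨c, Finset.mem_union.2 <| or_iff_not_imp_left.2 fun hxc ↦ ?_, hc⟩
    exact boundaryCells_subset_nearFrontierCells m A <| mem_boundaryCells.2
      ⟨⟨z, hc, hzA⟩, fun hsub ↦ hxc <| Finset.mem_filter.2 ⟨Finset.mem_univ c, hsub (hx c)⟩⟩
  have hcard : accepted.card = N := by
    rw [← Fintype.card_subtype, ← Fintype.card_congr e, Fintype.card_fin]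
  have hcube (c : GridIndex d m) : volume.real (gridCubeP c) = ((m : ℝ) ^ (d + 1))⁻¹ := by
    rw [measureReal_def, volume_gridCubeP, ENNReal.toReal_ofReal (by positivity)]
  rw [← le_div_iff₀ (by positivity)]
  calc volume.real A = volume.real (A ∩ ⋃ c : GridIndex d m, gridCubeP c) :=
        measureReal_congr <| by
          simpa [inter_eq_left.2 hA] using (ae_eq_refl A).inter (iUnion_gridCubeP_ae_eq hm).symm
    _ ≤ ∑ c ∈ accepted ∪ nearFrontierCells m A, volume.real (gridCubeP c) := by
        refine (measureReal_mono hcells ?_).trans (measureReal_biUnion_finset_le _ _)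
        exact (measure_biUnion_lt_top (Finset.finite_toSet _) fun c _ ↦ by
          simp [volume_gridCubeP]).ne
    _ ≤ (N + (nearFrontierCells m A).card) / (m : ℝ) ^ (d + 1) := by
        simp only [hcube, Finset.sum_const, nsmul_eq_mul, ← div_eq_mul_inv]
        gcongr
        exact_mod_cast (Finset.card_union_le _ _).trans_eq (by rw [hcard])

theorem pow_succ_le_two_div_volume_mul (hm : 0 < m) (hA : A ⊆ Icc 0 1) (hpos : 0 < volume.real A)
    {x : GridIndex d m → (Fin d → ℝ) × ℝ} (hx : ∀ c, x c ∈ gridCubeP c) {N : ℕ}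
    (e : Fin N ≃ {c // x c ∈ A})
    (hcard : 2 * ((nearFrontierCells m A).card : ℝ) ≤ volume.real A * (m : ℝ) ^ (d + 1)) :
    (m : ℝ) ^ (d + 1) ≤ 2 / volume.real A * N := by
  rw [div_mul_eq_mul_div, le_div_iff₀ hpos]
  linarith [volume_mul_pow_le_add_card_nearFrontierCells hm hA hx e]

/-! ### Stratified points with small deviations over the net -/

theorem card_gridPoint_mul_exp_lt_one (hd : 1 ≤ d) (hm : 2 ^ (d + 1) < m) :
    (Fintype.card (Fin d → Fin (m ^ (d + 2) + 1)) : ℝ)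
      * (2 * exp (-(2 * (d + 1) * d * log m))) < 1 := by
  have hm₁ : (1 : ℝ) ≤ m := Nat.one_le_cast.2 (Nat.one_le_two_pow.trans hm.le)
  have hm' : (2 : ℝ) ^ (d + 1) < m := mod_cast hm
  have hexp : exp (-(2 * (d + 1) * d * log m)) = ((m : ℝ) ^ (2 * (d + 1) * d))⁻¹ := by
    rw [exp_neg, ← exp_log (show (0 : ℝ) < (m : ℝ) ^ (2 * (d + 1) * d) by positivity), log_pow]
    push_cast
    rfl
  rw [hexp, ← mul_assoc, ← div_eq_mul_inv, div_lt_one (by positivity)]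
  calc (Fintype.card (Fin d → Fin (m ^ (d + 2) + 1)) : ℝ) * 2
      = ((m : ℝ) ^ (d + 2) + 1) ^ d * 2 := by simp
    _ ≤ (2 * (m : ℝ) ^ (d + 2)) ^ d * 2 := by
        gcongr
        linarith [one_le_pow₀ hm₁ (n := d + 2)]
    _ = 2 ^ (d + 1) * (m : ℝ) ^ ((d + 2) * d) := by rw [mul_pow, ← pow_mul]; ring
    _ < m * (m : ℝ) ^ ((d + 2) * d) := by gcongr
    _ = (m : ℝ) ^ ((d + 2) * d + 1) := by ring
    _ ≤ (m : ℝ) ^ (2 * (d + 1) * d) := pow_le_pow_right₀ hm₁ (by nlinarith)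

theorem exists_mem_gridCubeP_forall_abs_sum_boxDeviation_lt (hd : 1 ≤ d) (hA : MeasurableSet A)
    (hA01 : A ⊆ Icc 0 1) (hpos : 0 < volume.real A) (hm : 2 ^ (d + 1) < m) {v : ℝ} (hv : 0 < v)
    (hcard : ((nearFrontierCells m A).card : ℝ) ≤ 4 * v) :
    ∃ x : GridIndex d m → (Fin d → ℝ) × ℝ, (∀ c, x c ∈ gridCubeP c) ∧
      ∀ k : Fin d → Fin (m ^ (d + 2) + 1),
        |∑ c, boxDeviation A (gridPoint k) (x c)| < √(4 * v * ((d + 1) * (d * log m))) := by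
  classical
  have hfin : volume A ≠ ⊤ := measure_ne_top_of_subset hA01 isCompact_Icc.measure_lt_top.ne
  have := log_natCast_nonneg m
  have hexp : -√(4 * v * ((d + 1) * (d * log m))) ^ 2 / (2 * v) = -(2 * (d + 1) * d * log m) := by
    rw [sq_sqrt (by positivity)]
    field_simp
    ring
  have hmean (t : Fin d → ℝ) : ∫ z in Icc 0 1, boxDeviation A t z = 0 := by
    rw [setIntegral_eq_integral_of_forall_compl_eq_zero, integral_boxDeviation hA hfin hpos]
    exact fun z hz ↦ indicator_of_notMem (fun hzA ↦ hz (hA01 hzA)) _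
  lift v to ℝ≥0 using hv.le
  simpa only [hmean, mul_zero, sub_zero] using exists_mem_gridCubeP_forall_abs_sum_sub_lt
    (f := fun k : Fin d → Fin (m ^ (d + 2) + 1) ↦ boxDeviation A (gridPoint k))
    (S := fun k ↦ boundaryCells m A ∪ cutCells m A (gridPoint k))
    (Nat.two_pow_pos _ |>.trans hm) (fun k ↦ measurable_boxDeviation hA _)
    (fun k ↦ boxDeviation_mem_Icc hfin _)
    (fun k c hc z hz w hw ↦ boxDeviation_eq_of_mem_gridCubeP hc hz hw)
    (fun k ↦ (Nat.cast_le.2 <| card_boundaryCells_union_cutCells_le hd hA01 _).trans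
      (mod_cast hcard))
    (sqrt_nonneg _) (hexp ▸ card_gridPoint_mul_exp_lt_one hd hm)

/-! ### The discrepancy bound for a region -/

theorem sqrt_pow_le_of_pow_succ_le {x a N : ℝ} (hx : 0 ≤ x) (ha : 0 ≤ a) (hN : 0 ≤ N)
    (h : x ^ (d + 1) ≤ a * N) :
    √(x ^ d) ≤ a ^ ((1 : ℝ) / 2 - 1 / (2 * (d + 1))) * N ^ ((1 : ℝ) / 2 - 1 / (2 * (d + 1))) := by
  have hp : (0 : ℝ) ≤ 1 / 2 - 1 / (2 * (d + 1)) := by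
    rw [sub_nonneg]
    gcongr
    linarith [d.cast_nonneg (α := ℝ)]
  have hexp : (d : ℝ) * (1 / 2) = (d + 1 : ℕ) * (1 / 2 - 1 / (2 * (d + 1))) := by
    push_cast
    field_simp
    ring
  rw [← mul_rpow ha hN, sqrt_eq_rpow, ← rpow_natCast_mul hx, hexp, rpow_natCast_mul hx]
  exact rpow_le_rpow (by positivity) h hp

theorem sqrt_deviation_div_le {κ a N : ℝ} (hκ : 0 ≤ κ) (ha : 0 ≤ a) (hm : 0 < m)
    (hlow : (m : ℝ) ^ (d + 1) ≤ a * N) (hmN : (m : ℝ) ^ d ≤ N) :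
    √(4 * (√(d + 1) * κ * (m : ℝ) ^ d) * ((d + 1) * (d * log m))) / N
      ≤ (d + 1 : ℝ) ^ ((3 : ℝ) / 4) * √(4 * κ) * a ^ ((1 : ℝ) / 2 - 1 / (2 * (d + 1)))
        * (√(log N) / N ^ ((1 : ℝ) / 2 + 1 / (2 * (d + 1)))) := by
  have hm' : (0 : ℝ) < m := Nat.cast_pos.2 hm
  have hN : 0 < N := (pow_pos hm' d).trans_le hmN
  have hlog : √(d * log m) ≤ √(log N) := by
    rw [← log_pow]
    gcongr
  have hfour : (d + 1 : ℝ) ^ ((3 : ℝ) / 4) = √((d + 1) * √(d + 1)) := by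
    have hd : (0 : ℝ) < d + 1 := by positivity
    rw [sqrt_eq_rpow, sqrt_eq_rpow, ← rpow_one_add' hd.le (by norm_num), ← rpow_mul hd.le]
    norm_num
  have hsplit : √(4 * (√(d + 1) * κ * (m : ℝ) ^ d) * ((d + 1) * (d * log m)))
      = (d + 1 : ℝ) ^ ((3 : ℝ) / 4) * √(4 * κ) * √((m : ℝ) ^ d) * √(d * log m) := by
    rw [hfour, ← sqrt_mul (by positivity), ← sqrt_mul (by positivity), ← sqrt_mul (by positivity)]
    ring_nf
  have hNpow : N ^ ((1 : ℝ) / 2 + 1 / (2 * (d + 1)))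
      = N / N ^ ((1 : ℝ) / 2 - 1 / (2 * (d + 1))) := by
    nth_rw 2 [← rpow_one N]
    rw [← rpow_sub hN]
    ring_nf
  rw [hsplit, hNpow]
  calc _ ≤ (d + 1 : ℝ) ^ ((3 : ℝ) / 4) * √(4 * κ) * (a ^ ((1 : ℝ) / 2 - 1 / (2 * (d + 1)))
        * N ^ ((1 : ℝ) / 2 - 1 / (2 * (d + 1)))) * √(log N) / N := by
        gcongr
        exact sqrt_pow_le_of_pow_succ_le hm'.le ha hN.le hlow
    _ = _ := by field_simp

theorem mul_div_pow_le_of_le_pow {N V η : ℝ} (hV : 0 < V) (hη : 0 < η) (hm : 0 < m)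
    (hN : N ≤ (m : ℝ) ^ (d + 1)) (hmη : d / V / η ≤ m) :
    N * (d * (1 / (m ^ (d + 2) : ℕ)) / V) ≤ η := by
  have hm' : (0 : ℝ) < m := Nat.cast_pos.2 hm
  calc N * (d * (1 / (m ^ (d + 2) : ℕ)) / V)
      ≤ (m : ℝ) ^ (d + 1) * (d * (1 / (m ^ (d + 2) : ℕ)) / V) := by gcongr
    _ = d / V / m := by
        push_cast
        rw [pow_succ _ (d + 1)]
        field_simp
    _ ≤ η := by
        rw [div_le_iff₀ hm', mul_comm]
        exact (div_le_iff₀ hη).1 hmη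

theorem star_discrepancy_stratified_general (hd : 1 ≤ d) (hA : MeasurableSet A)
    (hA01 : A ⊆ Icc 0 1) (hpos : 0 < volume.real A) {κ : ℝ} (hκ : 0 < κ)
    (hMink : ∀ᶠ ε in 𝓝[>] 0, volume (euclNbhdP (frontier A) ε) ≤ ENNReal.ofReal (2 * κ * ε))
    {η : ℝ} (hη : 0 < η) :
    ∀ᶠ m : ℕ in atTop, ∃ x : GridIndex d m → (Fin d → ℝ) × ℝ, (∀ c, x c ∈ gridCubeP c) ∧
      ∀ (N : ℕ) (e : Fin N ≃ {c // x c ∈ A}), ∀ t ∈ Icc (0 : Fin d → ℝ) 1,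
        |1 / (N : ℝ) * ∑ k, (lowerBox t).indicator (fun _ ↦ (1 : ℝ)) (x (e k)).1 - boxFraction A t|
          ≤ (d + 1 : ℝ) ^ ((3 : ℝ) / 4) * √(4 * κ)
              * (2 / volume.real A) ^ ((1 : ℝ) / 2 - 1 / (2 * (d + 1)))
              * (√(log N) / (N : ℝ) ^ ((1 : ℝ) / 2 + 1 / (2 * (d + 1)))) + η / N := by
  have hcast : Tendsto (fun m : ℕ ↦ (m : ℝ)) atTop atTop := tendsto_natCast_atTop_atTop
  filter_upwards [eventually_card_nearFrontierCells_le hκ.le hMink,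
    eventually_gt_atTop (2 ^ (d + 1)),
    hcast.eventually_ge_atTop (2 * (4 * √(d + 1) * κ) / volume.real A),
    hcast.eventually_ge_atTop (2 / volume.real A),
    hcast.eventually_ge_atTop (d / volume.real A / η)] with m hcard hm hmκ hmA hmη
  have hm₀ : 0 < m := (Nat.two_pow_pos _).trans hm
  have hm' : (0 : ℝ) < m := Nat.cast_pos.2 hm₀
  obtain ⟨x, hx, hdev⟩ := exists_mem_gridCubeP_forall_abs_sum_boxDeviation_lt hd hA hA01 hpos hm
    (v := √(d + 1) * κ * (m : ℝ) ^ d) (by positivity) (by linarith)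
  refine ⟨x, hx, fun N e t ht ↦ ?_⟩
  have hlow : (m : ℝ) ^ (d + 1) ≤ 2 / volume.real A * N := by
    refine pow_succ_le_two_div_volume_mul hm₀ hA01 hpos hx e ?_
    calc 2 * ((nearFrontierCells m A).card : ℝ)
        ≤ 2 * (4 * √(d + 1) * κ) * (m : ℝ) ^ d := by linarith
      _ ≤ m * volume.real A * (m : ℝ) ^ d :=
          mul_le_mul_of_nonneg_right ((div_le_iff₀ hpos).1 hmκ) (by positivity)
      _ = volume.real A * (m : ℝ) ^ (d + 1) := by ring
  have hmN : (m : ℝ) ^ d ≤ N := by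
    refine le_of_mul_le_mul_right ?_ hm'
    rw [← pow_succ, mul_comm (N : ℝ)]
    exact hlow.trans (by gcongr)
  have hN : (0 : ℝ) < N := (pow_pos hm' d).trans_le hmN
  have hnet : N * (d * (1 / (m ^ (d + 2) : ℕ)) / volume.real A) ≤ η :=
    mul_div_pow_le_of_le_pow hpos hη hm₀ (card_le_pow_of_equiv e) hmη
  calc _ = |∑ k, (lowerBox t).indicator (fun _ ↦ 1) (x (e k)).1 - N * boxFraction A t| / N := by
        rw [← abs_of_pos hN, ← abs_div, abs_of_pos hN, sub_div, mul_div_cancel_left₀ _ hN.ne',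
          one_div_mul_eq_div]
    _ ≤ (√(4 * (√(d + 1) * κ * (m : ℝ) ^ d) * ((d + 1) * (d * log m))) + η) / N := by
        gcongr
        exact (abs_sum_indicator_lowerBox_sub_le hA01 (by positivity) (fun k ↦ (hdev k).le) e
          ht).trans (by gcongr)
    _ ≤ _ := by
        rw [add_div]
        gcongr
        exact sqrt_deviation_div_le hκ.le (by positivity) (by positivity) hlow hmN

/-! ### Minkowski content and graph regions -/

theorem HasMinkowskiContentP.eventually_volume_le {M κ : ℝ} (h : HasMinkowskiContentP A M)
    (hM : 0 < M) (hMκ : M < κ) :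
    ∀ᶠ ε in 𝓝[>] 0, volume (euclNbhdP (frontier A) ε) ≤ ENNReal.ofReal (2 * κ * ε) := by
  filter_upwards [h.eventually_lt_const hMκ, h.eventually_const_lt hM, self_mem_nhdsWithin]
    with ε hlt hpos hε
  rw [mem_Ioi] at hε
  -- The junk value `⊤.toReal = 0` is excluded by `0 < M`.
  have hfin : volume (euclNbhdP (frontier A) ε) ≠ ⊤ := fun htop ↦ by simp [htop] at hpos
  rw [← ENNReal.ofReal_toReal hfin]
  refine ENNReal.ofReal_le_ofReal ?_
  rw [div_lt_iff₀ (by positivity)] at hlt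
  linarith

variable {ψ : (Fin d → ℝ) → ℝ} {L : ℝ}

theorem measurableSet_graphRegion (hψ : Measurable ψ) : MeasurableSet (graphRegion ψ L) :=
  (measurable_fst measurableSet_Icc).inter <| (measurable_snd measurableSet_Icc).inter <|
    measurableSet_le (measurable_snd.const_mul L) (hψ.comp measurable_fst)

theorem graphRegion_subset_Icc (ψ : (Fin d → ℝ) → ℝ) (L : ℝ) : graphRegion ψ L ⊆ Icc 0 1 :=
  fun _ hz ↦ ⟨⟨hz.1.1, hz.2.1.1⟩, hz.1.2, hz.2.1.2⟩

theorem volume_real_graphRegion_inter (hL : 0 < L) (hψ : Measurable ψ)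
    (hψ0 : ∀ z ∈ Icc (0 : Fin d → ℝ) 1, 0 ≤ ψ z) (hψL : ∀ z ∈ Icc (0 : Fin d → ℝ) 1, ψ z ≤ L)
    {B : Set (Fin d → ℝ)} (hB : MeasurableSet B) (hB01 : B ⊆ Icc 0 1) :
    volume.real (graphRegion ψ L ∩ B ×ˢ univ) = (∫ z in B, ψ z) / L := by
  have hsection (z : Fin d → ℝ) : volume (Prod.mk z ⁻¹' (graphRegion ψ L ∩ B ×ˢ univ))
      = B.indicator (fun z ↦ ENNReal.ofReal (ψ z / L)) z := by
    by_cases hz : z ∈ B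
    · have hIcc : Prod.mk z ⁻¹' (graphRegion ψ L ∩ B ×ˢ univ) = Icc 0 (ψ z / L) := by
        ext y
        have hle : y ≤ ψ z / L → y ≤ 1 := fun hy ↦
          hy.trans <| (div_le_one hL).2 <| hψL z (hB01 hz)
        simpa [graphRegion, hz, le_div_iff₀' hL, and_assoc, (hB01 hz).1, (hB01 hz).2] using
          fun _ hy ↦ hle ((le_div_iff₀' hL).2 hy)
      rw [hIcc, indicator_of_mem hz, Real.volume_Icc, sub_zero]
    · have hempty : Prod.mk z ⁻¹' (graphRegion ψ L ∩ B ×ˢ univ) = ∅ := by ext; simp [hz]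
      rw [hempty, indicator_of_notMem hz, measure_empty]
  rw [measureReal_def, Measure.volume_eq_prod, Measure.prod_apply
    ((measurableSet_graphRegion hψ).inter (hB.prod .univ)), lintegral_congr hsection,
    lintegral_indicator hB, ← integral_div, integral_eq_lintegral_of_nonneg_ae]
  · exact (ae_restrict_mem hB).mono fun z hz ↦ div_nonneg (hψ0 z (hB01 hz)) hL.le
  · exact (hψ.div_const L).aestronglyMeasurable

theorem volume_real_graphRegion (hL : 0 < L) (hψ : Measurable ψ)
    (hψ0 : ∀ z ∈ Icc (0 : Fin d → ℝ) 1, 0 ≤ ψ z) (hψL : ∀ z ∈ Icc (0 : Fin d → ℝ) 1, ψ z ≤ L) :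
    volume.real (graphRegion ψ L) = (∫ z in Icc 0 1, ψ z) / L := by
  rw [← volume_real_graphRegion_inter hL hψ hψ0 hψL measurableSet_Icc Subset.rfl,
    inter_eq_left.2 (show graphRegion ψ L ⊆ Icc 0 1 ×ˢ univ from fun z hz ↦ ⟨hz.1, mem_univ z.2⟩)]

theorem boxFraction_graphRegion (hL : 0 < L) (hψ : Measurable ψ)
    (hψ0 : ∀ z ∈ Icc (0 : Fin d → ℝ) 1, 0 ≤ ψ z) (hψL : ∀ z ∈ Icc (0 : Fin d → ℝ) 1, ψ z ≤ L)
    {t : Fin d → ℝ} (ht : t ≤ 1) :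
    boxFraction (graphRegion ψ L) t = 1 / (∫ z in Icc 0 1, ψ z) * ∫ z in lowerBox t, ψ z := by
  have hbox : lowerBox t ⊆ Icc 0 1 := fun z hz ↦
    ⟨fun i ↦ (hz i).1, fun i ↦ (hz i).2.le.trans (ht i)⟩
  rw [boxFraction, volume_real_graphRegion hL hψ hψ0 hψL,
    volume_real_graphRegion_inter hL hψ hψ0 hψL (measurableSet_lowerBox t) hbox,
    div_div_div_cancel_right₀ hL.ne', one_div_mul_eq_div]

theorem two_div_div_rpow {L C : ℝ} (hL : 0 ≤ L) (hC : 0 ≤ C) (a b : ℝ) :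
    (2 / (C / L)) ^ (b - a) = 1 / ((2 * L) ^ (a - b) * C ^ (b - a)) := by
  rw [div_div_eq_mul_div, div_rpow (by positivity) hC, ← neg_sub a b, rpow_neg (by positivity)]
  ring

/-- **Existence of stratified inputs with small star discrepancy** (Theorem 1 of the
paper, with `s = d+1`): there is `m₀` such that for every `m ≥ m₀` there exists a
stratified point set (one point in each of the `m^s` grid cubes) whose accepted points,
projected onto the first `s-1` coordinates, have weighted star discrepancy at most
`s^{3/4}√(6M_A) / ((2L)^{1/(2s)-1/2} C^{1/2-1/(2s)}) · √(log N)/N^{1/2+1/(2s)} + 2C/(LN)`. -/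
theorem star_discrepancy_stratified (d : ℕ) (hd : 1 ≤ d)
    (L : ℝ) (hL : 0 < L) (ψ : (Fin d → ℝ) → ℝ) (hmeas : Measurable ψ)
    (hψ0 : ∀ z ∈ Icc (0 : Fin d → ℝ) 1, 0 ≤ ψ z)
    (hψL : ∀ z ∈ Icc (0 : Fin d → ℝ) 1, ψ z ≤ L)
    (C : ℝ) (hC : C = ∫ z in Icc (0 : Fin d → ℝ) 1, ψ z) (hCpos : 0 < C)
    (MA : ℝ) (hMApos : 0 < MA) (hMink : HasMinkowskiContentP (graphRegion ψ L) MA) :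
    ∃ m₀ : ℕ, ∀ m : ℕ, m₀ ≤ m →
      ∃ x : ((Fin d → Fin m) × Fin m) → (Fin d → ℝ) × ℝ,
        (∀ c, x c ∈ gridCubeP c) ∧
        ∀ N : ℕ, N = Nat.card {c : (Fin d → Fin m) × Fin m // x c ∈ graphRegion ψ L} →
        ∀ (y : Fin N → (Fin d → ℝ))
          (e : Fin N ≃ {c : (Fin d → Fin m) × Fin m // x c ∈ graphRegion ψ L}),
          (∀ k, y k = (x (e k)).1) →
          ∀ t ∈ Icc (0 : Fin d → ℝ) 1,
            |(1 / (N : ℝ)) * ∑ k, (lowerBox t).indicator (fun _ => (1 : ℝ)) (y k)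
                - (1 / C) * ∫ z in lowerBox t, ψ z|
              ≤ ((d + 1 : ℝ) ^ ((3 : ℝ) / 4) * Real.sqrt (6 * MA)
                    / ((2 * L) ^ ((1 : ℝ) / (2 * (d + 1)) - 1 / 2)
                        * C ^ ((1 : ℝ) / 2 - 1 / (2 * (d + 1)))))
                  * (Real.sqrt (Real.log N) / (N : ℝ) ^ ((1 : ℝ) / 2 + 1 / (2 * (d + 1))))
                + 2 * C / (L * N) := by
  have hvol := volume_real_graphRegion hL hmeas hψ0 hψL
  rw [← hC] at hvol
  obtain ⟨m₀, hm₀⟩ := eventually_atTop.1 <| star_discrepancy_stratified_general hd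
    (measurableSet_graphRegion hmeas) (graphRegion_subset_Icc ψ L) (hvol ▸ div_pos hCpos hL)
    (by positivity) (hMink.eventually_volume_le hMApos (κ := 3 / 2 * MA) (by linarith))
    (η := 2 * C / L) (by positivity)
  refine ⟨m₀, fun m hm ↦ ?_⟩
  obtain ⟨x, hx, hdisc⟩ := hm₀ m hm
  refine ⟨x, hx, fun N _ y e hy t ht ↦ ?_⟩
  have hMA : 4 * (3 / 2 * MA) = 6 * MA := by ring
  simpa only [boxFraction_graphRegion hL hmeas hψ0 hψL ht.2, ← hC, hvol, hy, hMA, div_div,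
    two_div_div_rpow hL.le hCpos.le, mul_one_div] using hdisc N e t ht
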